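/- arXiv:2011.03434 — 3 statements merged into one kernel-verified Lean document; each statement's English description precedes it below -/
import Mathlib

section
/- Every finite bipartite graph G = (A ∪ B, E) in which every node has a strict preference order over its neighbors admits a popular max-matching, i.e., a maximum matching M with Δ(M,N) ≥ 0 for every maximum matching N in G. -/
open Classical

noncomputable section

namespace PopMax

/-- A bipartite preference instance `G = (A ∪ B, E)`:
`E a b` says there is an edge between `a ∈ A` and `b ∈ B`;
`prefA a b b'` says `a` strictly prefers `b` to `b'`;
`prefB b a a'` says `b` strictly prefers `a` to `a'`. -/
structure PrefSys (A : Type*) (B : Type*) where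
  E : A → B → Prop
  prefA : A → B → B → Prop
  prefB : B → A → A → Prop

/-- Every node has a strict (linear) preference order over its neighbors. -/
def PrefSys.IsValid {A B : Type*} (I : PrefSys A B) : Prop :=
  (∀ a b, ¬ I.prefA a b b) ∧
  (∀ a b₁ b₂ b₃, I.prefA a b₁ b₂ → I.prefA a b₂ b₃ → I.prefA a b₁ b₃) ∧
  (∀ a b₁ b₂, I.E a b₁ → I.E a b₂ → b₁ ≠ b₂ → I.prefA a b₁ b₂ ∨ I.prefA a b₂ b₁) ∧
  (∀ b a, ¬ I.prefB b a a) ∧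
  (∀ b a₁ a₂ a₃, I.prefB b a₁ a₂ → I.prefB b a₂ a₃ → I.prefB b a₁ a₃) ∧
  (∀ b a₁ a₂, I.E a₁ b → I.E a₂ b → a₁ ≠ a₂ → I.prefB b a₁ a₂ ∨ I.prefB b a₂ a₁)

variable {A B : Type*}

/-- A matching: a set of pairwise disjoint edges. -/
def IsMatching (I : PrefSys A B) (M : Finset (A × B)) : Prop :=
  (∀ p ∈ M, I.E p.1 p.2) ∧
  (∀ p ∈ M, ∀ q ∈ M, p.1 = q.1 → p = q) ∧
  (∀ p ∈ M, ∀ q ∈ M, p.2 = q.2 → p = q)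

def matchedA (M : Finset (A × B)) (a : A) : Prop := ∃ b, (a, b) ∈ M
def matchedB (M : Finset (A × B)) (b : B) : Prop := ∃ a, (a, b) ∈ M

/-- A maximum matching: a matching of maximum cardinality. -/
def IsMaximumMatching (I : PrefSys A B) (M : Finset (A × B)) : Prop :=
  IsMatching I M ∧ ∀ N : Finset (A × B), IsMatching I N → N.card ≤ M.card

/-- A perfect matching matches all nodes. -/
def IsPerfectMatching (I : PrefSys A B) (M : Finset (A × B)) : Prop :=
  IsMatching I M ∧ (∀ a, matchedA M a) ∧ (∀ b, matchedB M b)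

/-- `a ∈ A` prefers matching `M` to matching `N`. -/
def prefersA (I : PrefSys A B) (a : A) (M N : Finset (A × B)) : Prop :=
  ∃ b, (a, b) ∈ M ∧ (¬ matchedA N a ∨ ∃ b', (a, b') ∈ N ∧ I.prefA a b b')

/-- `b ∈ B` prefers matching `M` to matching `N`. -/
def prefersB (I : PrefSys A B) (b : B) (M N : Finset (A × B)) : Prop :=
  ∃ a, (a, b) ∈ M ∧ (¬ matchedB N b ∨ ∃ a', (a', b) ∈ N ∧ I.prefB b a a')

/-- A node `u ∈ A ∪ B` prefers matching `M` to matching `N`. -/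
def prefers (I : PrefSys A B) (u : A ⊕ B) (M N : Finset (A × B)) : Prop :=
  match u with
  | Sum.inl a => prefersA I a M N
  | Sum.inr b => prefersB I b M N

/-- `φ(M,N)`: the number of nodes preferring `M` to `N`. -/
def phi [Fintype A] [Fintype B] (I : PrefSys A B) (M N : Finset (A × B)) : ℕ :=
  (Finset.univ.filter (fun u : A ⊕ B => prefers I u M N)).card

/-- `Δ(M,N) = φ(M,N) − φ(N,M)`. -/
def Delta [Fintype A] [Fintype B] (I : PrefSys A B) (M N : Finset (A × B)) : ℤ :=
  (phi I M N : ℤ) - (phi I N M : ℤ)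

/-- A popular max-matching: a maximum matching `M` with `Δ(M,N) ≥ 0`
for every maximum matching `N`. -/
def IsPopularMaxMatching [Fintype A] [Fintype B] (I : PrefSys A B)
    (M : Finset (A × B)) : Prop :=
  IsMaximumMatching I M ∧
    ∀ N : Finset (A × B), IsMaximumMatching I N → 0 ≤ Delta I M N

/-- The edge `(a,b) ∉ M` blocks `M`. -/
def Blocks (I : PrefSys A B) (M : Finset (A × B)) (a : A) (b : B) : Prop :=
  I.E a b ∧ (a, b) ∉ M ∧
  (¬ matchedA M a ∨ ∃ b', (a, b') ∈ M ∧ I.prefA a b b') ∧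
  (¬ matchedB M b ∨ ∃ a', (a', b) ∈ M ∧ I.prefB b a a')

/-- A stable matching: a matching with no blocking edge. -/
def IsStable (I : PrefSys A B) (S : Finset (A × B)) : Prop :=
  IsMatching I S ∧ ∀ a b, ¬ Blocks I S a b

/-- The edge weight `wt_M(a,b) ∈ {0, ±2}`. -/
def wt (I : PrefSys A B) (M : Finset (A × B)) (a : A) (b : B) : ℤ :=
  if Blocks I M a b then 2
  else if (∃ b', (a, b') ∈ M ∧ I.prefA a b' b) ∧ (∃ a', (a', b) ∈ M ∧ I.prefB b a' a) then -2
  else 0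

/-- The underlying simple graph on the node set `A ⊕ B`. -/
def graphOf (I : PrefSys A B) : SimpleGraph (A ⊕ B) :=
  SimpleGraph.fromRel (fun u w =>
    match u, w with
    | Sum.inl a, Sum.inr b => I.E a b
    | _, _ => False)

/-- The (undirected) edge `e` is an edge of the matching `M`. -/
def edgeInM (M : Finset (A × B)) (e : Sym2 (A ⊕ B)) : Prop :=
  ∃ a b, (a, b) ∈ M ∧ e = s(Sum.inl a, Sum.inr b)

/-- Consecutive edges alternate between `M` and `E ∖ M`. -/
def altRel (M : Finset (A × B)) (e f : Sym2 (A ⊕ B)) : Prop :=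
  edgeInM M e ↔ ¬ edgeInM M f

/-- An alternating path with respect to `M`. -/
def IsAltPath (I : PrefSys A B) (M : Finset (A × B)) {u w : A ⊕ B}
    (p : (graphOf I).Walk u w) : Prop :=
  p.IsPath ∧ List.Chain' (altRel M) p.edges

/-- An alternating cycle with respect to `M` (alternation also across the wrap-around). -/
def IsAltCycle (I : PrefSys A B) (M : Finset (A × B)) {w : A ⊕ B}
    (c : (graphOf I).Walk w w) : Prop :=
  c.IsCycle ∧ List.Chain' (altRel M) (c.edges ++ c.edges.take 1)

/-- `wt_M` as a function on undirected edges. -/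
def wtSym (I : PrefSys A B) (M : Finset (A × B)) : Sym2 (A ⊕ B) → ℤ :=
  Sym2.lift ⟨fun u w =>
      match u, w with
      | Sum.inl a, Sum.inr b => wt I M a b
      | Sum.inr b, Sum.inl a => wt I M a b
      | _, _ => 0,
    by rintro (a | b) (a' | b') <;> rfl⟩

/-- `wt_M(ρ) = Σ_{e ∈ ρ} wt_M(e)` for a walk `ρ`. -/
def wtWalk (I : PrefSys A B) (M : Finset (A × B)) {u w : A ⊕ B}
    (p : (graphOf I).Walk u w) : ℤ :=
  (p.edges.map (wtSym I M)).sum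

/-- The node `u ∈ A ∪ B` is unmatched in `M`. -/
def unmatchedNode (M : Finset (A × B)) : A ⊕ B → Prop
  | Sum.inl a => ¬ matchedA M a
  | Sum.inr b => ¬ matchedB M b

/-- The set of edges `(a,b) ∈ A × B` used by the walk `p`. -/
def pairsOf [Fintype A] [Fintype B] (I : PrefSys A B) {u w : A ⊕ B}
    (p : (graphOf I).Walk u w) : Finset (A × B) :=
  Finset.univ.filter (fun ab : A × B => s(Sum.inl ab.1, Sum.inr ab.2) ∈ p.edges)

/-- `M` is Pareto-optimal: no matching `N` has `φ(N,M) > 0` and `φ(M,N) = 0`. -/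
def IsParetoOptimal [Fintype A] [Fintype B] (I : PrefSys A B) (M : Finset (A × B)) : Prop :=
  ¬ ∃ N : Finset (A × B), IsMatching I N ∧ 0 < phi I N M ∧ phi I M N = 0

/-! ### The auxiliary instance `G*` -/

/-- `A* = {a_0, …, a_{n0−1} : a ∈ A}` where `n0 = |A|`. -/
abbrev AStar (A : Type*) [Fintype A] : Type _ := A × Fin (Fintype.card A)

/-- `B* = B̃ ∪ {d_1(a), …, d_{n0−1}(a) : a ∈ A}`; the dummy node `(a, j)`
(with `j : Fin (n0 − 1)`) stands for `d_{j+1}(a)`. -/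
abbrev BStar (A : Type*) (B : Type*) [Fintype A] : Type _ :=
  B ⊕ (A × Fin (Fintype.card A - 1))

/-- The auxiliary instance `G*` with its edges and preferences. -/
def starSys [Fintype A] (I : PrefSys A B) : PrefSys (AStar A) (BStar A B) where
  E := fun ai w =>
    match ai, w with
    | (a, _i), Sum.inl b => I.E a b
    | (a, i), Sum.inr (a', j) => a = a' ∧ ((i : ℕ) = (j : ℕ) ∨ (i : ℕ) = (j : ℕ) + 1)
  prefA := fun ai u v =>
    match ai, u, v with
    | (a, _i), Sum.inl b, Sum.inl b' => I.prefA a b b'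
    | (a, i), Sum.inl _b, Sum.inr (a', j) => a = a' ∧ (j : ℕ) = (i : ℕ)
    | (a, i), Sum.inr (a', j), Sum.inl _b => a = a' ∧ (j : ℕ) + 1 = (i : ℕ)
    | (a, i), Sum.inr (a', j), Sum.inr (a'', j') =>
        a = a' ∧ a = a'' ∧ (j : ℕ) + 1 = (i : ℕ) ∧ (j' : ℕ) = (i : ℕ)
  prefB := fun w x y =>
    match w, x, y with
    | Sum.inl b, (a, i), (a', i') =>
        (i' : ℕ) < (i : ℕ) ∨ ((i : ℕ) = (i' : ℕ) ∧ I.prefB b a a')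
    | Sum.inr (a, j), (a', i), (a'', i') =>
        a' = a ∧ a'' = a ∧ (i : ℕ) = (j : ℕ) ∧ (i' : ℕ) = (j : ℕ) + 1

/-- The projection `S ↦ S'`: delete edges incident to dummy nodes and replace
`(a_i, b̃)` by `(a, b)`. -/
def proj [Fintype A] [Fintype B] (S : Finset (AStar A × BStar A B)) : Finset (A × B) :=
  Finset.univ.filter (fun ab : A × B =>
    ∃ i : Fin (Fintype.card A), ((ab.1, i), (Sum.inl ab.2 : BStar A B)) ∈ S)

/-- `a ∈ A_i` for the level partition of `A` induced by a (stable) matching `S` in `G*`: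
for `i ≤ n0 − 2`, `a ∈ A_i` iff `(a_i, b̃) ∈ S` for some `b̃ ∈ B̃`;
`A_{n0−1}` consists of all remaining nodes of `A`. -/
def AtLevelA [Fintype A] (S : Finset (AStar A × BStar A B)) (a : A) (i : ℕ) : Prop :=
  (i + 1 < Fintype.card A ∧
     ∃ j : Fin (Fintype.card A), (j : ℕ) = i ∧
       ∃ b : B, ((a, j), (Sum.inl b : BStar A B)) ∈ S) ∨
  (i + 1 = Fintype.card A ∧
     ∀ j : Fin (Fintype.card A), (j : ℕ) + 1 < Fintype.card A →
       ∀ b : B, ((a, j), (Sum.inl b : BStar A B)) ∉ S)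

/-- `b ∈ B_i` for the level partition of `B` induced by a (stable) matching `S` in `G*`:
for `1 ≤ i ≤ n0 − 1`, `b ∈ B_i` iff `(a_i, b̃) ∈ S` for some `a ∈ A_i`;
`B_0` consists of all remaining nodes of `B`. -/
def AtLevelB [Fintype A] (S : Finset (AStar A × BStar A B)) (b : B) (i : ℕ) : Prop :=
  (1 ≤ i ∧ i < Fintype.card A ∧
     ∃ j : Fin (Fintype.card A), (j : ℕ) = i ∧
       ∃ a : A, AtLevelA S a i ∧ ((a, j), (Sum.inl b : BStar A B)) ∈ S) ∨
  (i = 0 ∧ ∀ j : Fin (Fintype.card A), 1 ≤ (j : ℕ) →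
       ∀ a : A, AtLevelA S a (j : ℕ) → ((a, j), (Sum.inl b : BStar A B)) ∉ S)

/-!
Give every edge `(a, b)` the copies `(a, b, 0), …, (a, b, L)` with `L > |A|`, and let `a` prefer
copies of lower level and `b` copies of higher level, ties being broken by the original
preferences. A stable set of copies exists by a monotone fixed-point argument. Its projection `M`
carries levels, with `a` and `b` on the same level when `(a, b) ∈ M`, unmatched nodes of `A` on
level `L` and unmatched nodes of `B` on level `0`; stability gives
`wt_M(a, b) ≤ 2 (level b - level a)` for every edge. The levels are thus a dual certificate: summing
over a matching `N` gives `wt_M(N) ≤ 2 L (|M| - |N|)`. Since `-2 |N| ≤ wt_M(N)` and `|N| < L`, no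
matching is larger than `M`, and since `Δ(N, M) ≤ wt_M(N)`, no maximum matching is more popular.
-/

section Sums

variable {ι X R : Type*} [AddCommMonoid R] [Preorder R] [AddLeftMono R] {s t : Finset ι}
  {g : ι → X} {f : X → R}

theorem sum_le_sum_comp_of_injOn {u : Finset X} (hg : Set.InjOn g s) (hsu : Set.MapsTo g s u)
    (hf : ∀ x ∉ g '' s, f x ≤ 0) : ∑ x ∈ u, f x ≤ ∑ i ∈ s, f (g i) := by
  rw [← Finset.sum_image (f := f) hg]
  refine Finset.sum_le_sum_of_subset_of_nonpos' (Finset.image_subset_iff.2 hsu)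
    fun x _ hx => hf x ?_
  rwa [← Finset.coe_image, Finset.mem_coe]

theorem sum_comp_le_sum_comp_of_injOn (hs : Set.InjOn g s) (ht : Set.InjOn g t)
    (hf : ∀ x, 0 ≤ f x) (hft : ∀ x ∉ g '' t, f x ≤ 0) :
    ∑ i ∈ s, f (g i) ≤ ∑ i ∈ t, f (g i) :=
  calc ∑ i ∈ s, f (g i) = ∑ x ∈ s.image g, f x := (Finset.sum_image hs).symm
    _ ≤ ∑ x ∈ s.image g ∪ t.image g, f x :=
        Finset.sum_le_sum_of_subset_of_nonneg Finset.subset_union_left fun x _ _ => hf x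
    _ ≤ ∑ i ∈ t, f (g i) := sum_le_sum_comp_of_injOn ht
        (fun _ hi => Finset.mem_union_right _ (Finset.mem_image_of_mem g hi)) hft

end Sums

theorem exists_extension_of_rightUnique {α β : Type*} {r : α → β → Prop}
    (hr : Relator.RightUnique r) (default : β) :
    ∃ f : α → β, (∀ a b, r a b → f a = b) ∧ ∀ a, (∀ b, ¬ r a b) → f a = default := by
  refine ⟨fun a => if h : ∃ b, r a b then h.choose else default, fun a b hab => ?_, fun a ha => ?_⟩
  · have h : ∃ b, r a b := ⟨b, hab⟩
    exact (dif_pos h).trans (hr h.choose_spec hab)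
  · exact dif_neg (not_exists.2 ha)

section Kernel

variable {α : Type*} {p q r : α → α → Prop} {T X : Set α}

/-- The elements of `T` that no element of `X` dominates, where `r d c` reads "`d` dominates
`c`". -/
def undominated (r : α → α → Prop) (T X : Set α) : Set α :=
  {c ∈ T | ∀ d ∈ X, ¬ r d c}

theorem undominated_subset : undominated r T X ⊆ T := fun _ hc => hc.1

theorem antitone_undominated (r : α → α → Prop) (T : Set α) : Antitone (undominated r T) :=
  fun _ _ hXY _ hc => ⟨hc.1, fun d hd => hc.2 d (hXY hd)⟩

theorem exists_undominated_of_notMem_undominated [IsTrans α r] (hr : T.WellFoundedOn r)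
    (hX : X ⊆ T) {c : α} (hc : c ∈ T) :
    c ∉ undominated r T X → ∃ d ∈ X, d ∈ undominated r T X ∧ r d c := by
  refine hr.induction hc
    (P := fun c => c ∉ undominated r T X → ∃ d ∈ X, d ∈ undominated r T X ∧ r d c)
    fun c hc ih hcX => ?_
  obtain ⟨d, hdX, hdc⟩ : ∃ d ∈ X, r d c := by
    by_contra! h
    exact hcX ⟨hc, h⟩
  by_cases hd : d ∈ undominated r T X
  · exact ⟨d, hdX, hd, hdc⟩
  · obtain ⟨e, heX, he, hed⟩ := ih d (hX hdX) hdc hd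
    exact ⟨e, heX, he, _root_.trans hed hdc⟩

theorem exists_undominated_pair (p q : α → α → Prop) (T : Set α) :
    ∃ X Y : Set α, Y = undominated p T X ∧ X = undominated q T Y := by
  let F : Set α →o Set α :=
    ⟨undominated q T ∘ undominated p T, (antitone_undominated q T).comp (antitone_undominated p T)⟩
  exact ⟨F.lfp, undominated p T F.lfp, rfl, F.map_lfp.symm⟩

/-- `S` is a kernel of `T` for two relations: no element of `S` dominates another one in either
relation, and every element of `T` outside `S` is dominated by `S` in one of them. These are the
stable sets of contracts when `p` and `q` are the preferences of the two sides of a market. -/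
structure IsKernel (p q : α → α → Prop) (T S : Set α) : Prop where
  subset : S ⊆ T
  not_left : ∀ c ∈ S, ∀ d ∈ S, ¬ p c d
  not_right : ∀ c ∈ S, ∀ d ∈ S, ¬ q c d
  mem_or_dominated : ∀ c ∈ T, c ∈ S ∨ (∃ d ∈ S, p d c) ∨ ∃ d ∈ S, q d c

-- The finite case is the Sands–Sauer–Woodrow theorem; the fixed-point proof is Fleiner's.
theorem exists_isKernel [IsTrans α p] [IsTrans α q] (hp : T.WellFoundedOn p)
    (hq : T.WellFoundedOn q) : ∃ S, IsKernel p q T S := by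
  obtain ⟨X, Y, hY, hX⟩ := exists_undominated_pair p q T
  have hXT : X ⊆ T := hX ▸ undominated_subset
  have hYT : Y ⊆ T := hY ▸ undominated_subset
  refine ⟨X ∩ Y, fun c hc => hXT hc.1, fun c hc d hd => ?_, fun c hc d hd => ?_, fun c hc => ?_⟩
  · exact (hY ▸ hd.2).2 c hc.1
  · exact (hX ▸ hd.1).2 c hc.2
  · by_cases hcX : c ∈ X
    · by_cases hcY : c ∈ Y
      · exact Or.inl ⟨hcX, hcY⟩
      · obtain ⟨d, hdX, hdY, hdc⟩ :=
          exists_undominated_of_notMem_undominated hp hXT hc (hY ▸ hcY)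
        exact Or.inr (Or.inl ⟨d, ⟨hdX, hY ▸ hdY⟩, hdc⟩)
    · obtain ⟨d, hdY, hdX, hdc⟩ :=
        exists_undominated_of_notMem_undominated hq hYT hc (hX ▸ hcX)
      exact Or.inr (Or.inr ⟨d, ⟨hX ▸ hdX, hdY⟩, hdc⟩)

end Kernel

section Vote

variable {X : Type*} {r : X → X → Prop} {t : Set X} {x : X}

/-- The vote `1`, `0` or `-1` of a node with preferences `r` for `x` against its current partner.
The partner is encoded as a set `t` with at most one element, empty for an unmatched node. -/
def vote (r : X → X → Prop) (t : Set X) (x : X) : ℤ :=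
  if (¬ ∃ y, y ∈ t) ∨ ∃ y, y ∈ t ∧ r x y then 1 else if ∃ y, y ∈ t ∧ r y x then -1 else 0

theorem vote_le_one (r : X → X → Prop) (t : Set X) (x : X) : vote r t x ≤ 1 := by
  unfold vote
  split_ifs <;> norm_num

theorem neg_one_le_vote (r : X → X → Prop) (t : Set X) (x : X) : -1 ≤ vote r t x := by
  unfold vote
  split_ifs <;> norm_num

theorem vote_eq_one_iff : vote r t x = 1 ↔ (¬ ∃ y, y ∈ t) ∨ ∃ y, y ∈ t ∧ r x y := by
  refine ⟨fun h => ?_, fun h => if_pos h⟩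
  by_contra hnot
  rw [vote, if_neg hnot] at h
  split_ifs at h
  norm_num at h

theorem vote_eq_neg_one_iff [Std.Asymm r] (ht : t.Subsingleton) :
    vote r t x = -1 ↔ ∃ y, y ∈ t ∧ r y x := by
  refine ⟨fun h => ?_, fun ⟨y, hy, hyx⟩ => ?_⟩
  · unfold vote at h
    split_ifs at h with _ hworse
    exact hworse
  · have hnot : ¬ ((¬ ∃ y, y ∈ t) ∨ ∃ y, y ∈ t ∧ r x y) := by
      rintro (hempty | ⟨z, hz, hxz⟩)
      · exact hempty ⟨y, hy⟩
      · exact Std.Asymm.asymm _ _ hyx (ht hz hy ▸ hxz)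
    rw [vote, if_neg hnot, if_pos ⟨y, hy, hyx⟩]

theorem vote_eq_zero_of_mem [Std.Irrefl r] (ht : t.Subsingleton) (hx : x ∈ t) :
    vote r t x = 0 := by
  have hself : ∀ y ∈ t, y = x := fun y hy => ht hy hx
  rw [vote, if_neg, if_neg]
  · rintro ⟨y, hy, hyx⟩
    exact Std.Irrefl.irrefl x (hself y hy ▸ hyx)
  · rintro (hempty | ⟨y, hy, hxy⟩)
    · exact hempty ⟨x, hx⟩
    · exact Std.Irrefl.irrefl x (hself y hy ▸ hxy)

theorem vote_ne_zero (h : ∀ y ∈ t, r x y ∨ r y x) : vote r t x ≠ 0 := by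
  by_cases ht : ∃ y, y ∈ t
  · obtain ⟨y, hy⟩ := ht
    unfold vote
    split_ifs with hbetter hworse
    · norm_num
    · norm_num
    · exact ((h y hy).elim (fun hxy => hbetter (Or.inr ⟨y, hy, hxy⟩))
        fun hyx => hworse ⟨y, hy, hyx⟩).elim
  · rw [vote_eq_one_iff.2 (Or.inl ht)]
    norm_num

/-- A node with preferences `r` prefers being matched to the (at most one) element of `s` to being
matched to the (at most one) element of `t`. -/
def Favors (r : X → X → Prop) (s t : Set X) : Prop :=
  ∃ x, x ∈ s ∧ ((¬ ∃ y, y ∈ t) ∨ ∃ y, y ∈ t ∧ r x y)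

theorem favors_iff_vote_eq_one {s : Set X} (hs : s.Subsingleton) (hx : x ∈ s) :
    Favors r s t ↔ vote r t x = 1 := by
  rw [vote_eq_one_iff]
  exact ⟨fun ⟨_, hz, h⟩ => hs hz hx ▸ h, fun h => ⟨x, hx, h⟩⟩

theorem favors_iff_vote_eq_neg_one [Std.Asymm r] {s : Set X} (hs : s.Subsingleton)
    (ht : t.Subsingleton) (hx : x ∈ s) : Favors r t s ↔ vote r t x = -1 := by
  rw [vote_eq_neg_one_iff ht]
  refine ⟨fun ⟨y, hy, h⟩ => ?_, fun ⟨y, hy, hyx⟩ => ⟨y, hy, Or.inr ⟨x, hx, hyx⟩⟩⟩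
  obtain hempty | ⟨z, hz, hyz⟩ := h
  · exact (hempty ⟨x, hx⟩).elim
  · exact ⟨y, hy, hs hz hx ▸ hyz⟩

theorem favors_sub_favors_eq_vote [Std.Asymm r] {s : Set X} (hs : s.Subsingleton)
    (ht : t.Subsingleton) (hx : x ∈ s) :
    ((if Favors r s t then 1 else 0) - if Favors r t s then 1 else 0) = vote r t x := by
  simp only [favors_iff_vote_eq_one hs hx, favors_iff_vote_eq_neg_one hs ht hx]
  have := vote_le_one r t x
  have := neg_one_le_vote r t x
  split_ifs <;> omega

end Vote

variable {I : PrefSys A B} {M N : Finset (A × B)} {a : A} {b : B}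

/-- The set of partners of `a ∈ A` in `M`; it has at most one element when `M` is a matching. -/
def partnersA (M : Finset (A × B)) (a : A) : Set B := {b | (a, b) ∈ M}

/-- The set of partners of `b ∈ B` in `M`; it has at most one element when `M` is a matching. -/
def partnersB (M : Finset (A × B)) (b : B) : Set A := {a | (a, b) ∈ M}

theorem IsMatching.injOn_fst (hM : IsMatching I M) : Set.InjOn Prod.fst (M : Set (A × B)) :=
  fun e he f hf => hM.2.1 e he f hf

theorem IsMatching.injOn_snd (hM : IsMatching I M) : Set.InjOn Prod.snd (M : Set (A × B)) :=
  fun e he f hf => hM.2.2 e he f hf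

theorem IsMatching.subsingleton_partnersA (hM : IsMatching I M) (a : A) :
    (partnersA M a).Subsingleton :=
  fun _ hb _ hb' => congrArg Prod.snd (hM.2.1 _ hb _ hb' rfl)

theorem IsMatching.subsingleton_partnersB (hM : IsMatching I M) (b : B) :
    (partnersB M b).Subsingleton :=
  fun _ ha _ ha' => congrArg Prod.fst (hM.2.2 _ ha _ ha' rfl)

theorem IsMatching.card_le_card_left [Fintype A] (hM : IsMatching I M) :
    M.card ≤ Fintype.card A :=
  Finset.card_le_card_of_injOn Prod.fst (fun _ _ => Finset.mem_univ _) hM.injOn_fst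

theorem PrefSys.IsValid.isStrictOrder_prefA (hI : I.IsValid) (a : A) :
    IsStrictOrder B (I.prefA a) where
  irrefl := hI.1 a
  trans := hI.2.1 a

theorem PrefSys.IsValid.isStrictOrder_prefB (hI : I.IsValid) (b : B) :
    IsStrictOrder A (I.prefB b) where
  irrefl := hI.2.2.2.1 b
  trans := hI.2.2.2.2.1 b

theorem PrefSys.IsValid.prefA_or_prefA (hI : I.IsValid) {b' : B} (hb : I.E a b) (hb' : I.E a b')
    (hne : b ≠ b') : I.prefA a b b' ∨ I.prefA a b' b :=
  hI.2.2.1 a b b' hb hb' hne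

theorem PrefSys.IsValid.prefB_or_prefB (hI : I.IsValid) {a' : A} (ha : I.E a b) (ha' : I.E a' b)
    (hne : a ≠ a') : I.prefB b a a' ∨ I.prefB b a' a :=
  hI.2.2.2.2.2 b a a' ha ha' hne

theorem neg_two_le_wt (I : PrefSys A B) (M : Finset (A × B)) (a : A) (b : B) :
    -2 ≤ wt I M a b := by
  unfold wt
  split_ifs <;> norm_num

theorem wt_eq_vote_add_vote (hI : I.IsValid) (hM : IsMatching I M) (hab : I.E a b) :
    wt I M a b = vote (I.prefA a) (partnersA M a) b + vote (I.prefB b) (partnersB M b) a := by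
  have := hI.isStrictOrder_prefA a
  have := hI.isStrictOrder_prefB b
  have hA := hM.subsingleton_partnersA a
  have hB := hM.subsingleton_partnersB b
  have blocks_iff : Blocks I M a b ↔ (a, b) ∉ M ∧
      vote (I.prefA a) (partnersA M a) b = 1 ∧ vote (I.prefB b) (partnersB M b) a = 1 := by
    rw [vote_eq_one_iff, vote_eq_one_iff]
    exact and_iff_right hab
  have both_worse_iff : ((∃ b', (a, b') ∈ M ∧ I.prefA a b' b) ∧
      ∃ a', (a', b) ∈ M ∧ I.prefB b a' a) ↔
      vote (I.prefA a) (partnersA M a) b = -1 ∧ vote (I.prefB b) (partnersB M b) a = -1 := by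
    rw [vote_eq_neg_one_iff hA, vote_eq_neg_one_iff hB]
    rfl
  simp only [wt, blocks_iff, both_worse_iff]
  by_cases hmem : (a, b) ∈ M
  · rw [vote_eq_zero_of_mem hA hmem, vote_eq_zero_of_mem hB hmem]
    norm_num
  · have voteA_ne_zero : vote (I.prefA a) (partnersA M a) b ≠ 0 := vote_ne_zero fun b' hb' =>
      hI.prefA_or_prefA hab (hM.1 _ hb') fun h => hmem (h ▸ hb')
    have voteB_ne_zero : vote (I.prefB b) (partnersB M b) a ≠ 0 := vote_ne_zero fun a' ha' =>
      hI.prefB_or_prefB hab (hM.1 _ ha') fun h => hmem (h ▸ ha')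
    have := vote_le_one (I.prefA a) (partnersA M a) b
    have := vote_le_one (I.prefB b) (partnersB M b) a
    have := neg_one_le_vote (I.prefA a) (partnersA M a) b
    have := neg_one_le_vote (I.prefB b) (partnersB M b) a
    simp only [hmem, not_false_eq_true, true_and]
    split_ifs <;> omega

/-- The vote of the node `u` between the matchings `M` and `N`: `1` if it prefers `N`, `-1` if it
prefers `M`. -/
def nodeVote (I : PrefSys A B) (M N : Finset (A × B)) (u : A ⊕ B) : ℤ :=
  (if prefers I u N M then 1 else 0) - if prefers I u M N then 1 else 0

theorem Delta_eq_sum_nodeVote [Fintype A] [Fintype B] (I : PrefSys A B) (M N : Finset (A × B)) :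
    Delta I N M = ∑ a, nodeVote I M N (Sum.inl a) + ∑ b, nodeVote I M N (Sum.inr b) := by
  rw [← Fintype.sum_sum_type (nodeVote I M N)]
  simp only [Delta, phi, nodeVote, Finset.card_filter, Finset.sum_sub_distrib]
  push_cast
  rfl

theorem nodeVote_nonpos_of_not_prefers {u : A ⊕ B} (h : ¬ prefers I u N M) :
    nodeVote I M N u ≤ 0 := by
  rw [nodeVote, if_neg h]
  split_ifs <;> norm_num

theorem nodeVote_inl_eq_vote (hI : I.IsValid) (hM : IsMatching I M) (hN : IsMatching I N)
    (hab : (a, b) ∈ N) :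
    nodeVote I M N (Sum.inl a) = vote (I.prefA a) (partnersA M a) b := by
  have := hI.isStrictOrder_prefA a
  exact favors_sub_favors_eq_vote (hN.subsingleton_partnersA a) (hM.subsingleton_partnersA a) hab

theorem nodeVote_inr_eq_vote (hI : I.IsValid) (hM : IsMatching I M) (hN : IsMatching I N)
    (hab : (a, b) ∈ N) :
    nodeVote I M N (Sum.inr b) = vote (I.prefB b) (partnersB M b) a := by
  have := hI.isStrictOrder_prefB b
  exact favors_sub_favors_eq_vote (hN.subsingleton_partnersB b) (hM.subsingleton_partnersB b) hab

theorem Delta_le_sum_wt [Fintype A] [Fintype B] (hI : I.IsValid) (hM : IsMatching I M)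
    (hN : IsMatching I N) : Delta I N M ≤ ∑ e ∈ N, wt I M e.1 e.2 := by
  have sumA_le : ∑ a, nodeVote I M N (Sum.inl a) ≤ ∑ e ∈ N, nodeVote I M N (Sum.inl e.1) := by
    refine sum_le_sum_comp_of_injOn hN.injOn_fst (fun _ _ => Finset.mem_univ _) fun a ha =>
      nodeVote_nonpos_of_not_prefers ?_
    rintro ⟨b, hab, -⟩
    exact ha ⟨(a, b), hab, rfl⟩
  have sumB_le : ∑ b, nodeVote I M N (Sum.inr b) ≤ ∑ e ∈ N, nodeVote I M N (Sum.inr e.2) := by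
    refine sum_le_sum_comp_of_injOn hN.injOn_snd (fun _ _ => Finset.mem_univ _) fun b hb =>
      nodeVote_nonpos_of_not_prefers ?_
    rintro ⟨a, hab, -⟩
    exact hb ⟨(a, b), hab, rfl⟩
  calc Delta I N M
      = ∑ a, nodeVote I M N (Sum.inl a) + ∑ b, nodeVote I M N (Sum.inr b) :=
        Delta_eq_sum_nodeVote I M N
    _ ≤ ∑ e ∈ N, nodeVote I M N (Sum.inl e.1) + ∑ e ∈ N, nodeVote I M N (Sum.inr e.2) :=
        add_le_add sumA_le sumB_le
    _ = ∑ e ∈ N, wt I M e.1 e.2 := by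
        rw [← Finset.sum_add_distrib]
        refine Finset.sum_congr rfl fun e he => ?_
        rw [nodeVote_inl_eq_vote hI hM hN he, nodeVote_inr_eq_vote hI hM hN he,
          wt_eq_vote_add_vote hI hM (hN.1 e he)]

/-- A matching `M` together with levels of the nodes in `{0, …, L}` that certify its popularity:
up to scaling, the levels are a dual solution for the problem of maximizing `wt_M(N)` over the
matchings `N` of a given size. -/
structure IsLevelling (I : PrefSys A B) (L : ℕ) (M : Finset (A × B)) (levelA : A → ℕ)
    (levelB : B → ℕ) : Prop where
  isMatching : IsMatching I M
  levelA_le : ∀ a, levelA a ≤ L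
  levelA_eq_levelB : ∀ a b, (a, b) ∈ M → levelA a = levelB b
  levelA_of_not_matchedA : ∀ a, ¬ matchedA M a → levelA a = L
  levelB_of_not_matchedB : ∀ b, ¬ matchedB M b → levelB b = 0
  wt_le : ∀ a b, I.E a b → wt I M a b ≤ 2 * ((levelB b : ℤ) - levelA a)

namespace IsLevelling

variable {L : ℕ} {levelA : A → ℕ} {levelB : B → ℕ}

theorem sum_levelB_le (h : IsLevelling I L M levelA levelB) (hN : IsMatching I N) :
    ∑ e ∈ N, (levelB e.2 : ℤ) ≤ ∑ e ∈ M, (levelB e.2 : ℤ) := by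
  refine sum_comp_le_sum_comp_of_injOn (f := fun b => (levelB b : ℤ)) hN.injOn_snd
    h.isMatching.injOn_snd (fun b => Nat.cast_nonneg _) fun b hb => ?_
  rw [h.levelB_of_not_matchedB b fun ⟨a, hab⟩ => hb ⟨(a, b), hab, rfl⟩, Nat.cast_zero]

theorem sum_colevelA_le (h : IsLevelling I L M levelA levelB) (hN : IsMatching I N) :
    ∑ e ∈ N, ((L : ℤ) - levelA e.1) ≤ ∑ e ∈ M, ((L : ℤ) - levelA e.1) := by
  refine sum_comp_le_sum_comp_of_injOn (f := fun a => (L : ℤ) - levelA a) hN.injOn_fst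
    h.isMatching.injOn_fst (fun a => sub_nonneg.2 (Nat.cast_le.2 (h.levelA_le a))) fun a ha => ?_
  rw [h.levelA_of_not_matchedA a fun ⟨b, hab⟩ => ha ⟨(a, b), hab, rfl⟩, sub_self]

theorem sum_wt_le (h : IsLevelling I L M levelA levelB) (hN : IsMatching I N) :
    ∑ e ∈ N, wt I M e.1 e.2 ≤ 2 * L * ((M.card : ℤ) - N.card) := by
  have sum_over_M : ∑ e ∈ M, ((levelB e.2 : ℤ) + (L - levelA e.1)) = L * M.card := by
    rw [Finset.sum_congr rfl fun e he => by rw [h.levelA_eq_levelB e.1 e.2 he, add_sub_cancel],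
      Finset.sum_const, nsmul_eq_mul, mul_comm]
  have sum_over_N : ∑ e ∈ N, ((levelB e.2 : ℤ) + (L - levelA e.1)) ≤ L * M.card := by
    rw [← sum_over_M, Finset.sum_add_distrib, Finset.sum_add_distrib]
    exact add_le_add (h.sum_levelB_le hN) (h.sum_colevelA_le hN)
  calc ∑ e ∈ N, wt I M e.1 e.2
      ≤ ∑ e ∈ N, 2 * (((levelB e.2 : ℤ) + (L - levelA e.1)) - L) :=
        Finset.sum_le_sum fun e he => (h.wt_le e.1 e.2 (hN.1 e he)).trans_eq (by ring)
    _ = 2 * (∑ e ∈ N, ((levelB e.2 : ℤ) + (L - levelA e.1)) - L * N.card) := by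
        rw [← Finset.mul_sum, Finset.sum_sub_distrib, Finset.sum_const, nsmul_eq_mul,
          mul_comm (N.card : ℤ)]
    _ ≤ 2 * L * ((M.card : ℤ) - N.card) := by linarith

theorem isMaximumMatching [Fintype A] (h : IsLevelling I L M levelA levelB)
    (hL : Fintype.card A < L) : IsMaximumMatching I M := by
  refine ⟨h.isMatching, fun N hN => ?_⟩
  by_contra! hlt
  have neg_card_le_sum_wt : -2 * (N.card : ℤ) ≤ ∑ e ∈ N, wt I M e.1 e.2 := by
    rw [mul_comm, ← nsmul_eq_mul]
    exact N.card_nsmul_le_sum _ _ fun e _ => neg_two_le_wt I M e.1 e.2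
  have card_lt : (N.card : ℤ) < L := by exact_mod_cast hN.card_le_card_left.trans_lt hL
  have card_diff : (M.card : ℤ) - N.card ≤ -1 := by omega
  nlinarith [h.sum_wt_le hN, card_lt, card_diff]

theorem isPopularMaxMatching [Fintype A] [Fintype B] (h : IsLevelling I L M levelA levelB)
    (hI : I.IsValid) (hL : Fintype.card A < L) : IsPopularMaxMatching I M := by
  have hmax := h.isMaximumMatching hL
  refine ⟨hmax, fun N hN => ?_⟩
  have card_eq : M.card = N.card := le_antisymm (hN.2 M hmax.1) (hmax.2 N hN.1)
  suffices Delta I N M ≤ 0 by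
    rw [Delta] at this ⊢
    omega
  calc Delta I N M ≤ ∑ e ∈ N, wt I M e.1 e.2 := Delta_le_sum_wt hI hmax.1 hN.1
    _ ≤ 2 * L * ((M.card : ℤ) - N.card) := h.sum_wt_le hN.1
    _ = 0 := by rw [card_eq, sub_self, mul_zero]

end IsLevelling

/-- The copies `(a, b, k)`, `k ≤ L`, of the edges `(a, b)`. -/
def levelledEdges (I : PrefSys A B) (L : ℕ) : Set (A × B × ℕ) :=
  {c | I.E c.1 c.2.1 ∧ c.2.2 ≤ L}

/-- The preferences of the nodes of `A` over levelled edges: lower levels first. -/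
def levelledPrefA (I : PrefSys A B) (c d : A × B × ℕ) : Prop :=
  c.1 = d.1 ∧ (c.2.2 < d.2.2 ∨ c.2.2 = d.2.2 ∧ I.prefA d.1 c.2.1 d.2.1)

/-- The preferences of the nodes of `B` over levelled edges: higher levels first. -/
def levelledPrefB (I : PrefSys A B) (c d : A × B × ℕ) : Prop :=
  c.2.1 = d.2.1 ∧ (d.2.2 < c.2.2 ∨ c.2.2 = d.2.2 ∧ I.prefB d.2.1 c.1 d.1)

theorem finite_levelledEdges [Finite A] [Finite B] (I : PrefSys A B) (L : ℕ) :
    (levelledEdges I L).Finite :=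
  (Set.finite_univ.prod (Set.finite_univ.prod (Set.finite_Iic L))).subset
    fun _ hc => ⟨trivial, trivial, hc.2⟩

theorem isStrictOrder_levelledPrefA (hI : I.IsValid) : IsStrictOrder _ (levelledPrefA I) where
  irrefl := by
    rintro c ⟨-, h | ⟨-, h⟩⟩
    · exact lt_irrefl _ h
    · exact hI.1 _ _ h
  trans := by
    rintro ⟨a, b₁, k₁⟩ ⟨_, b₂, k₂⟩ ⟨_, b₃, k₃⟩ ⟨rfl, h₁₂⟩ ⟨rfl, h₂₃⟩
    have := hI.2.1 a b₁ b₂ b₃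
    grind [levelledPrefA]

theorem isStrictOrder_levelledPrefB (hI : I.IsValid) : IsStrictOrder _ (levelledPrefB I) where
  irrefl := by
    rintro c ⟨-, h | ⟨-, h⟩⟩
    · exact lt_irrefl _ h
    · exact hI.2.2.2.1 _ _ h
  trans := by
    rintro ⟨a₁, b, k₁⟩ ⟨a₂, _, k₂⟩ ⟨a₃, _, k₃⟩ ⟨rfl, h₁₂⟩ ⟨rfl, h₂₃⟩
    have := hI.2.2.2.2.1 b a₁ a₂ a₃
    grind [levelledPrefB]

theorem exists_isKernel_levelledEdges [Finite A] [Finite B] (hI : I.IsValid) (L : ℕ) :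
    ∃ S, IsKernel (levelledPrefA I) (levelledPrefB I) (levelledEdges I L) S := by
  have := isStrictOrder_levelledPrefA hI
  have := isStrictOrder_levelledPrefB hI
  exact exists_isKernel (finite_levelledEdges I L).wellFoundedOn
    (finite_levelledEdges I L).wellFoundedOn

/-- The projection of a set of levelled edges to edges, forgetting the levels. -/
def edgesOf [Fintype A] [Fintype B] (S : Set (A × B × ℕ)) : Finset (A × B) :=
  Finset.univ.filter fun e => ∃ k, (e.1, e.2, k) ∈ S

theorem mem_edgesOf [Fintype A] [Fintype B] {S : Set (A × B × ℕ)} :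
    (a, b) ∈ edgesOf S ↔ ∃ k, (a, b, k) ∈ S := by
  simp [edgesOf]

section LevelledKernel

variable {L : ℕ} {S : Set (A × B × ℕ)} {levelA : A → ℕ} {levelB : B → ℕ}

theorem IsKernel.eq_of_fst_eq
    (hS : IsKernel (levelledPrefA I) (levelledPrefB I) (levelledEdges I L) S) (hI : I.IsValid)
    {b' : B} {k k' : ℕ} (h : (a, b, k) ∈ S) (h' : (a, b', k') ∈ S) : b = b' ∧ k = k' := by
  have hlt := hS.not_left _ h _ h'
  have hgt := hS.not_left _ h' _ h
  simp only [levelledPrefA, true_and, not_or, not_and] at hlt hgt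
  have level_eq : k = k' := by omega
  refine ⟨by_contra fun hne => ?_, level_eq⟩
  exact (hI.prefA_or_prefA (hS.subset h).1 (hS.subset h').1 hne).elim
    (hlt.2 level_eq) (hgt.2 level_eq.symm)

theorem IsKernel.eq_of_snd_eq
    (hS : IsKernel (levelledPrefA I) (levelledPrefB I) (levelledEdges I L) S) (hI : I.IsValid)
    {a' : A} {k k' : ℕ} (h : (a, b, k) ∈ S) (h' : (a', b, k') ∈ S) : a = a' ∧ k = k' := by
  have hlt := hS.not_right _ h _ h'
  have hgt := hS.not_right _ h' _ h
  simp only [levelledPrefB, true_and, not_or, not_and] at hlt hgt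
  have level_eq : k = k' := by omega
  refine ⟨by_contra fun hne => ?_, level_eq⟩
  exact (hI.prefB_or_prefB (hS.subset h).1 (hS.subset h').1 hne).elim
    (hlt.2 level_eq) (hgt.2 level_eq.symm)

theorem IsKernel.isMatching_edgesOf [Fintype A] [Fintype B]
    (hS : IsKernel (levelledPrefA I) (levelledPrefB I) (levelledEdges I L) S) (hI : I.IsValid) :
    IsMatching I (edgesOf S) := by
  refine ⟨?_, ?_, ?_⟩
  · rintro ⟨a, b⟩ he
    obtain ⟨k, hk⟩ := mem_edgesOf.1 he
    exact (hS.subset hk).1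
  · rintro ⟨a, b⟩ he ⟨_, b'⟩ he' rfl
    obtain ⟨k, hk⟩ := mem_edgesOf.1 he
    obtain ⟨k', hk'⟩ := mem_edgesOf.1 he'
    rw [(hS.eq_of_fst_eq hI hk hk').1]
  · rintro ⟨a, b⟩ he ⟨a', _⟩ he' rfl
    obtain ⟨k, hk⟩ := mem_edgesOf.1 he
    obtain ⟨k', hk'⟩ := mem_edgesOf.1 he'
    rw [(hS.eq_of_snd_eq hI hk hk').1]

theorem IsKernel.dominated_of_notMem_edgesOf [Fintype A] [Fintype B]
    (hS : IsKernel (levelledPrefA I) (levelledPrefB I) (levelledEdges I L) S) (hI : I.IsValid)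
    (hlevelA : ∀ a b k, (a, b, k) ∈ S → levelA a = k)
    (hlevelB : ∀ a b k, (a, b, k) ∈ S → levelB b = k)
    (hab : I.E a b) (hnot : (a, b) ∉ edgesOf S) {k : ℕ} (hk : k ≤ L) :
    (levelA a < k ∨ levelA a = k ∧ vote (I.prefA a) (partnersA (edgesOf S) a) b = -1) ∨
      k < levelB b ∨ levelB b = k ∧ vote (I.prefB b) (partnersB (edgesOf S) b) a = -1 := by
  have hM := hS.isMatching_edgesOf hI
  have := hI.isStrictOrder_prefA a
  have := hI.isStrictOrder_prefB b
  rw [vote_eq_neg_one_iff (hM.subsingleton_partnersA a),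
    vote_eq_neg_one_iff (hM.subsingleton_partnersB b)]
  obtain hmem | ⟨⟨_, b', l⟩, hd, rfl, hpref⟩ | ⟨⟨a', _, l⟩, hd, rfl, hpref⟩ :=
    hS.mem_or_dominated (a, b, k) ⟨hab, hk⟩
  · exact (hnot (mem_edgesOf.2 ⟨k, hmem⟩)).elim
  · rw [hlevelA _ _ _ hd]
    exact Or.inl (hpref.imp_right fun h => ⟨h.1, b', mem_edgesOf.2 ⟨l, hd⟩, h.2⟩)
  · rw [hlevelB _ _ _ hd]
    exact Or.inr (hpref.imp_right fun h => ⟨h.1, a', mem_edgesOf.2 ⟨l, hd⟩, h.2⟩)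

theorem IsKernel.wt_edgesOf_le [Fintype A] [Fintype B]
    (hS : IsKernel (levelledPrefA I) (levelledPrefB I) (levelledEdges I L) S) (hI : I.IsValid)
    (hlevelA : ∀ a b k, (a, b, k) ∈ S → levelA a = k)
    (hlevelB : ∀ a b k, (a, b, k) ∈ S → levelB b = k)
    (hA : levelA a ≤ L) (hB : levelB b ≤ L) (hab : I.E a b) :
    wt I (edgesOf S) a b ≤ 2 * ((levelB b : ℤ) - levelA a) := by
  have hM := hS.isMatching_edgesOf hI
  have := hI.isStrictOrder_prefA a
  have := hI.isStrictOrder_prefB b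
  rw [wt_eq_vote_add_vote hI hM hab]
  by_cases hmem : (a, b) ∈ edgesOf S
  · obtain ⟨k, hk⟩ := mem_edgesOf.1 hmem
    rw [vote_eq_zero_of_mem (hM.subsingleton_partnersA a) hmem,
      vote_eq_zero_of_mem (hM.subsingleton_partnersB b) hmem, hlevelA a b k hk, hlevelB a b k hk]
    norm_num
  · have hdom {k : ℕ} (hk : k ≤ L) :=
      hS.dominated_of_notMem_edgesOf hI hlevelA hlevelB hab hmem hk
    have := vote_le_one (I.prefA a) (partnersA (edgesOf S) a) b
    have := vote_le_one (I.prefB b) (partnersB (edgesOf S) b) a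
    -- The copies at these three levels force `levelA a ≤ levelB b + 1`, with both votes `-1` in
    -- case of equality, and at least one vote `-1` if `levelA a = levelB b`.
    have := hdom hA
    have := hdom hB
    have := hdom ((Nat.sub_le _ 1).trans hA)
    omega

end LevelledKernel

theorem exists_isLevelling [Finite A] [Finite B] (hI : I.IsValid) (L : ℕ) :
    ∃ M levelA levelB, IsLevelling I L M levelA levelB := by
  cases nonempty_fintype A
  cases nonempty_fintype B
  obtain ⟨S, hS⟩ := exists_isKernel_levelledEdges hI L
  obtain ⟨levelA, hlevelA, levelA_default⟩ := exists_extension_of_rightUnique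
    (r := fun a k => ∃ b, (a, b, k) ∈ S) (fun _ _ _ ⟨_, h⟩ ⟨_, h'⟩ => (hS.eq_of_fst_eq hI h h').2) L
  obtain ⟨levelB, hlevelB, levelB_default⟩ := exists_extension_of_rightUnique
    (r := fun b k => ∃ a, (a, b, k) ∈ S) (fun _ _ _ ⟨_, h⟩ ⟨_, h'⟩ => (hS.eq_of_snd_eq hI h h').2) 0
  have levelA_le (a : A) : levelA a ≤ L := by
    by_cases h : ∃ k b, (a, b, k) ∈ S
    · obtain ⟨k, b, hk⟩ := h
      exact (hlevelA a k ⟨b, hk⟩).trans_le (hS.subset hk).2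
    · exact (levelA_default a (not_exists.1 h)).le
  have levelB_le (b : B) : levelB b ≤ L := by
    by_cases h : ∃ k a, (a, b, k) ∈ S
    · obtain ⟨k, a, hk⟩ := h
      exact (hlevelB b k ⟨a, hk⟩).trans_le (hS.subset hk).2
    · exact (levelB_default b (not_exists.1 h)).trans_le (Nat.zero_le L)
  refine ⟨edgesOf S, levelA, levelB, hS.isMatching_edgesOf hI, levelA_le, fun a b hab => ?_,
    fun a ha => levelA_default a fun k ⟨b, hk⟩ => ha ⟨b, mem_edgesOf.2 ⟨k, hk⟩⟩,
    fun b hb => levelB_default b fun k ⟨a, hk⟩ => hb ⟨a, mem_edgesOf.2 ⟨k, hk⟩⟩,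
    fun a b => hS.wt_edgesOf_le hI (fun a b k h => hlevelA a k ⟨b, h⟩)
      (fun a b k h => hlevelB b k ⟨a, h⟩) (levelA_le a) (levelB_le b)⟩
  obtain ⟨k, hk⟩ := mem_edgesOf.1 hab
  exact (hlevelA a k ⟨b, hk⟩).trans (hlevelB b k ⟨a, hk⟩).symm

/-- Every finite bipartite instance with strict preferences admits a
popular max-matching. -/
theorem stmt16 {A B : Type*} [Fintype A] [Fintype B] [DecidableEq A] [DecidableEq B]
    (I : PrefSys A B) (hI : I.IsValid) :
    ∃ M : Finset (A × B), IsPopularMaxMatching I M := by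
  obtain ⟨M, levelA, levelB, hM⟩ := exists_isLevelling hI (Fintype.card A + 1)
  exact ⟨M, hM.isPopularMaxMatching hI (Nat.lt_succ_self _)⟩

end PopMax
end
end

section
/- Let M be a matching in G and let ρ be an alternating cycle with respect to M such that every edge of ρ not in M blocks M. Then every node on ρ prefers M ⊕ ρ to M and every node not on ρ is matched to the same partner in both matchings; hence φ(M ⊕ ρ, M) equals the number of nodes on ρ and φ(M, M ⊕ ρ) = 0. In particular, M is not Pareto-optimal. -/
open Classical

noncomputable section

namespace PopMax

variable {A B : Type*}

/-!
Each node of an alternating cycle `ρ` lies on exactly two edges of `ρ`, one in `M` and one outside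
`M`. Passing to `M ⊕ ρ` exchanges the two, so `M ⊕ ρ` is again a matching, and each node of `ρ` is
now matched along an edge that blocks `M`, that is, to a node it likes better than its partner in
`M`. Off `ρ` nothing changes.

The two sides of the graph are treated at once by working with nodes `u : A ⊕ B` and undirected
edges `s(u, x)`.
-/

section Nodes

variable {I : PrefSys A B} {M N : Finset (A × B)} {u x y : A ⊕ B} {a a' : A} {b b' : B}

@[simp]
lemma edgeInM_inl_inr : edgeInM M s(.inl a, .inr b) ↔ (a, b) ∈ M := by
  simp [edgeInM]

@[simp]
lemma edgeInM_inr_inl : edgeInM M s(.inr b, .inl a) ↔ (a, b) ∈ M := by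
  simp [edgeInM]

@[simp]
lemma not_edgeInM_inl_inl : ¬ edgeInM M s(.inl a, .inl a') := by
  simp [edgeInM]

@[simp]
lemma not_edgeInM_inr_inr : ¬ edgeInM M s(.inr b, .inr b') := by
  simp [edgeInM]

@[simp]
lemma graphOf_adj_inl_inr : (graphOf I).Adj (.inl a) (.inr b) ↔ I.E a b := by
  simp [graphOf]

@[simp]
lemma not_graphOf_adj_inl_inl : ¬ (graphOf I).Adj (.inl a) (.inl a') := by
  simp [graphOf]

@[simp]
lemma not_graphOf_adj_inr_inr : ¬ (graphOf I).Adj (.inr b) (.inr b') := by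
  simp [graphOf]

lemma edgeInM_symmDiff [DecidableEq A] [DecidableEq B] {e : Sym2 (A ⊕ B)} :
    edgeInM (symmDiff M N) e ↔ Xor (edgeInM M e) (edgeInM N e) := by
  induction e with | _ u x
  rcases u with a | b <;> rcases x with a' | b' <;> simp [Finset.mem_symmDiff, Xor]

lemma edgeInM_pairsOf [Fintype A] [Fintype B] {v w : A ⊕ B} {p : (graphOf I).Walk v w}
    {e : Sym2 (A ⊕ B)} : edgeInM (pairsOf I p) e ↔ e ∈ p.edges := by
  induction e with | _ u x
  rcases u with a | b <;> rcases x with a' | b'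
  · simpa using mt p.adj_of_mem_edges not_graphOf_adj_inl_inl
  · simp [pairsOf]
  · simp [pairsOf, Sym2.eq_swap]
  · simpa using mt p.adj_of_mem_edges not_graphOf_adj_inr_inr

lemma isMatching_iff :
    IsMatching I M ↔ (∀ e, edgeInM M e → e ∈ (graphOf I).edgeSet) ∧
      ∀ u x y, edgeInM M s(u, x) → edgeInM M s(u, y) → x = y := by
  constructor
  · rintro ⟨hE, hA, hB⟩
    refine ⟨?_, ?_⟩
    · rintro _ ⟨a, b, hab, rfl⟩
      simpa using hE _ hab
    · rintro (a | b) (a₁ | b₁) (a₂ | b₂) h₁ h₂ <;>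
        simp only [edgeInM_inl_inr, edgeInM_inr_inl, not_edgeInM_inl_inl, not_edgeInM_inr_inr]
          at h₁ h₂
      · simpa using hA _ h₁ _ h₂ rfl
      · simpa using hB _ h₁ _ h₂ rfl
  · rintro ⟨hE, huniq⟩
    refine ⟨fun p hp => ?_, ?_, ?_⟩
    · simpa using hE s(.inl p.1, .inr p.2) (by simpa using hp)
    · rintro ⟨a, b₁⟩ h₁ ⟨_, b₂⟩ h₂ rfl
      simpa using huniq (.inl a) (.inr b₁) (.inr b₂) (by simpa) (by simpa)
    · rintro ⟨a₁, b⟩ h₁ ⟨a₂, _⟩ h₂ rfl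
      simpa using huniq (.inr b) (.inl a₁) (.inl a₂) (by simpa) (by simpa)

lemma IsMatching.eq_of_edgeInM (hM : IsMatching I M) (hx : edgeInM M s(u, x))
    (hy : edgeInM M s(u, y)) : x = y :=
  (isMatching_iff.mp hM).2 u x y hx hy

end Nodes

section Preferences

/-- The preference relation of a node on either side of the graph: `I.pref u x y` says that `u`
strictly prefers `x` to `y`. It is false unless `x` and `y` both lie on the side opposite to `u`. -/
def PrefSys.pref (I : PrefSys A B) : A ⊕ B → A ⊕ B → A ⊕ B → Prop
  | .inl a, .inr b, .inr b' => I.prefA a b b'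
  | .inr b, .inl a, .inl a' => I.prefB b a a'
  | _, _, _ => False

/-- No node prefers two nodes each to the other. This weakens `PrefSys.IsValid`: preferences may
have ties and need not be transitive. -/
def PrefSys.IsAsymm (I : PrefSys A B) : Prop :=
  ∀ u x y, I.pref u x y → ¬ I.pref u y x

/-- The node `u` would rather be matched to `x` than keep its situation in `M`: it is unmatched
in `M`, or it prefers `x` to its partner in `M`. -/
def WouldSwitch (I : PrefSys A B) (M : Finset (A × B)) (u x : A ⊕ B) : Prop :=
  unmatchedNode M u ∨ ∃ y, edgeInM M s(u, y) ∧ I.pref u x y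

variable {I : PrefSys A B} {M N : Finset (A × B)} {u x : A ⊕ B} {a : A} {b : B}

lemma PrefSys.IsValid.isAsymm (hI : I.IsValid) : I.IsAsymm := by
  obtain ⟨irreflA, transA, -, irreflB, transB, -⟩ := hI
  rintro (a | b) (a₁ | b₁) (a₂ | b₂) hxy hyx <;> try exact hxy
  · exact irreflA _ _ (transA _ _ _ _ hxy hyx)
  · exact irreflB _ _ (transB _ _ _ _ hxy hyx)

lemma unmatchedNode_iff : unmatchedNode M u ↔ ∀ x, ¬ edgeInM M s(u, x) := by
  rcases u with a | b <;> simp [unmatchedNode, matchedA, matchedB]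

lemma prefers_iff : prefers I u M N ↔ ∃ x, edgeInM M s(u, x) ∧ WouldSwitch I N u x := by
  rcases u with a | b <;>
    simp [prefers, prefersA, prefersB, WouldSwitch, unmatchedNode, PrefSys.pref]

lemma Blocks.wouldSwitch_inl (h : Blocks I M a b) : WouldSwitch I M (.inl a) (.inr b) := by
  simpa [WouldSwitch, unmatchedNode, PrefSys.pref] using h.2.2.1

lemma Blocks.wouldSwitch_inr (h : Blocks I M a b) : WouldSwitch I M (.inr b) (.inl a) := by
  simpa [WouldSwitch, unmatchedNode, PrefSys.pref] using h.2.2.2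

lemma wouldSwitch_of_mem_edges {v w : A ⊕ B} {p : (graphOf I).Walk v w}
    (hblock : ∀ a b, s(.inl a, .inr b) ∈ p.edges → (a, b) ∉ M → Blocks I M a b)
    (hp : s(u, x) ∈ p.edges) (hM : ¬ edgeInM M s(u, x)) : WouldSwitch I M u x := by
  rcases u with a | b <;> rcases x with a' | b'
  · exact absurd (p.adj_of_mem_edges hp) not_graphOf_adj_inl_inl
  · exact (hblock a b' hp (by simpa using hM)).wouldSwitch_inl
  · exact (hblock a' b (Sym2.eq_swap ▸ hp) (by simpa using hM)).wouldSwitch_inr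
  · exact absurd (p.adj_of_mem_edges hp) not_graphOf_adj_inr_inr

lemma WouldSwitch.pref (h : WouldSwitch I M u x) (hM : IsMatching I M) {y : A ⊕ B}
    (hy : edgeInM M s(u, y)) : I.pref u x y := by
  obtain hu | ⟨z, hz, hxz⟩ := h
  · exact absurd hy (unmatchedNode_iff.mp hu y)
  · rwa [hM.eq_of_edgeInM hy hz]

lemma PrefSys.IsAsymm.not_prefers_of_prefers (hI : I.IsAsymm) (hM : IsMatching I M)
    (hN : IsMatching I N) (h : prefers I u N M) : ¬ prefers I u M N := by
  intro h'
  obtain ⟨x, hx, hxM⟩ := prefers_iff.mp h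
  obtain ⟨y, hy, hyN⟩ := prefers_iff.mp h'
  exact hI u x y (hxM.pref hM hy) (hyN.pref hN hx)

lemma PrefSys.IsAsymm.not_prefers_of_edgeInM_iff (hI : I.IsAsymm) (hN : IsMatching I N)
    (h : ∀ x, edgeInM M s(u, x) ↔ edgeInM N s(u, x)) : ¬ prefers I u M N := by
  intro hu
  obtain ⟨x, hx, hxN⟩ := prefers_iff.mp hu
  have hxx : I.pref u x x := hxN.pref hN ((h x).mp hx)
  exact hI u x x hxx hxx

end Preferences

section ParetoImprovement

variable [Fintype A] [Fintype B] {I : PrefSys A B} {M N : Finset (A × B)} {S : Finset (A ⊕ B)}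

lemma phi_eq_card_of_forall_mem_prefers (hI : I.IsAsymm) (hM : IsMatching I M)
    (hS : ∀ u ∈ S, prefers I u N M)
    (hoff : ∀ u ∉ S, ∀ x, edgeInM N s(u, x) ↔ edgeInM M s(u, x)) : phi I N M = S.card := by
  unfold phi
  congr 1
  ext u
  simp only [Finset.mem_filter, Finset.mem_univ, true_and]
  refine ⟨fun h => ?_, hS u⟩
  by_contra hu
  exact hI.not_prefers_of_edgeInM_iff hM (hoff u hu) h

lemma phi_eq_zero_of_forall_mem_prefers (hI : I.IsAsymm) (hM : IsMatching I M) (hN : IsMatching I N)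
    (hS : ∀ u ∈ S, prefers I u N M)
    (hoff : ∀ u ∉ S, ∀ x, edgeInM N s(u, x) ↔ edgeInM M s(u, x)) : phi I M N = 0 := by
  unfold phi
  rw [Finset.card_eq_zero, Finset.filter_eq_empty_iff]
  intro u _
  by_cases hu : u ∈ S
  · exact hI.not_prefers_of_prefers hM hN (hS u hu)
  · exact hI.not_prefers_of_edgeInM_iff hN fun x => (hoff u hu x).symm

end ParetoImprovement

section CyclicChains

lemma cycle_chain_coe_iff {α : Type*} {r : α → α → Prop} {l : List α} :
    Cycle.Chain r (l : Cycle α) ↔ (l ++ l.take 1).IsChain r := by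
  cases l <;> simp

lemma exists_neighborSet_eq_pair_of_chain_edges {V : Type*} {G : SimpleGraph V} {u v : V}
    {r : Sym2 V → Sym2 V → Prop} {c : G.Walk v v} (hc : c.IsCycle)
    (hr : Cycle.Chain r (c.edges : Cycle (Sym2 V))) (hu : u ∈ c.support) :
    ∃ x y, c.toSubgraph.neighborSet u = {x, y} ∧ r s(u, x) s(u, y) := by
  have hrot : (c.rotate u hu).IsCycle := hc.rotate hu
  have hne : (c.rotate u hu).edges ≠ [] := by simpa using hrot.not_nil
  refine ⟨(c.rotate u hu).penultimate, (c.rotate u hu).snd, ?_, ?_⟩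
  · rw [← c.toSubgraph_rotate hu, hrot.neighborSet_toSubgraph_endpoint, Set.pair_comm]
  · rw [← Cycle.coe_eq_coe.mpr (c.rotate_edges u hu), Cycle.chain_ne_nil r hne,
      List.isChain_cons] at hr
    have h := hr.1 _ (List.head_mem_head? hne)
    rwa [SimpleGraph.Walk.head_edges_eq_mk_start_snd,
      SimpleGraph.Walk.getLast_edges_eq_mk_penultimate_end, Sym2.eq_swap] at h

end CyclicChains

section AlternatingCycles

variable {I : PrefSys A B} {M : Finset (A × B)} {u v : A ⊕ B} {c : (graphOf I).Walk v v}

lemma IsAltCycle.exists_neighbors (hc : IsAltCycle I M c) (hu : u ∈ c.support) :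
    ∃ x y, edgeInM M s(u, x) ∧ ¬ edgeInM M s(u, y) ∧
      ∀ z, s(u, z) ∈ c.edges ↔ z = x ∨ z = y := by
  obtain ⟨x, y, hxy, halt⟩ :=
    exists_neighborSet_eq_pair_of_chain_edges hc.1 (cycle_chain_coe_iff.mpr hc.2) hu
  have hedges (z : A ⊕ B) : s(u, z) ∈ c.edges ↔ z = x ∨ z = y := by
    rw [← SimpleGraph.Walk.adj_toSubgraph_iff_mem_edges, ← SimpleGraph.Subgraph.mem_neighborSet,
      hxy, Set.mem_insert_iff, Set.mem_singleton_iff]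
  by_cases hx : edgeInM M s(u, x)
  · exact ⟨x, y, hx, halt.mp hx, hedges⟩
  · exact ⟨y, x, not_not.mp (mt halt.mpr hx), hx, fun z => (hedges z).trans or_comm⟩

variable [Fintype A] [Fintype B] [DecidableEq A] [DecidableEq B]

lemma edgeInM_symmDiff_pairsOf {e : Sym2 (A ⊕ B)} :
    edgeInM (symmDiff M (pairsOf I c)) e ↔ Xor (edgeInM M e) (e ∈ c.edges) := by
  rw [edgeInM_symmDiff, edgeInM_pairsOf]

lemma edgeInM_symmDiff_pairsOf_of_notMem_support (hu : u ∉ c.support) (x : A ⊕ B) :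
    edgeInM (symmDiff M (pairsOf I c)) s(u, x) ↔ edgeInM M s(u, x) := by
  have hux : s(u, x) ∉ c.edges := mt c.fst_mem_support_of_mem_edges hu
  simp [edgeInM_symmDiff_pairsOf, Xor, hux]

lemma IsAltCycle.isMatching_symmDiff (hc : IsAltCycle I M c) (hM : IsMatching I M) :
    IsMatching I (symmDiff M (pairsOf I c)) := by
  refine isMatching_iff.mpr ⟨fun e he => ?_, fun u z₁ z₂ h₁ h₂ => ?_⟩
  · obtain ⟨heM, -⟩ | ⟨hec, -⟩ := edgeInM_symmDiff_pairsOf.mp he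
    · exact (isMatching_iff.mp hM).1 e heM
    · exact c.edges_subset_edgeSet hec
  by_cases hu : u ∈ c.support
  · obtain ⟨x, y, hx, -, hedges⟩ := hc.exists_neighbors hu
    suffices h : ∀ z, edgeInM (symmDiff M (pairsOf I c)) s(u, z) → z = y from
      (h z₁ h₁).trans (h z₂ h₂).symm
    intro z hz
    obtain ⟨hzM, hzc⟩ | ⟨hzc, hzM⟩ := edgeInM_symmDiff_pairsOf.mp hz
    · exact absurd ((hedges z).mpr (.inl (hM.eq_of_edgeInM hzM hx))) hzc
    · exact ((hedges z).mp hzc).resolve_left fun hzx => hzM (hzx ▸ hx)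
  · rw [edgeInM_symmDiff_pairsOf_of_notMem_support hu] at h₁ h₂
    exact hM.eq_of_edgeInM h₁ h₂

lemma IsAltCycle.prefers_symmDiff (hc : IsAltCycle I M c)
    (hblock : ∀ a b, s(.inl a, .inr b) ∈ c.edges → (a, b) ∉ M → Blocks I M a b)
    (hu : u ∈ c.support) : prefers I u (symmDiff M (pairsOf I c)) M := by
  obtain ⟨x, y, -, hy, hedges⟩ := hc.exists_neighbors hu
  have hyc : s(u, y) ∈ c.edges := (hedges y).mpr (.inr rfl)
  exact prefers_iff.mpr
    ⟨y, edgeInM_symmDiff_pairsOf.mpr (.inr ⟨hyc, hy⟩), wouldSwitch_of_mem_edges hblock hyc hy⟩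

end AlternatingCycles

theorem stmt17_general {A B : Type*} [Fintype A] [Fintype B] [DecidableEq A] [DecidableEq B]
    (I : PrefSys A B) (hI : I.IsAsymm) (M : Finset (A × B)) (hM : IsMatching I M)
    {v : A ⊕ B} (c : (graphOf I).Walk v v) (hc : IsAltCycle I M c)
    (hblock : ∀ (a : A) (b : B), s(Sum.inl a, Sum.inr b) ∈ c.edges → (a, b) ∉ M →
        Blocks I M a b) :
    (∀ u ∈ c.support, prefers I u (symmDiff M (pairsOf I c)) M) ∧
    (∀ a : A, (Sum.inl a : A ⊕ B) ∉ c.support →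
        ∀ b, ((a, b) ∈ symmDiff M (pairsOf I c) ↔ (a, b) ∈ M)) ∧
    (∀ b : B, (Sum.inr b : A ⊕ B) ∉ c.support →
        ∀ a, ((a, b) ∈ symmDiff M (pairsOf I c) ↔ (a, b) ∈ M)) ∧
    phi I (symmDiff M (pairsOf I c)) M =
      c.support.toFinset.card ∧
    phi I M (symmDiff M (pairsOf I c)) = 0 ∧
    ¬ IsParetoOptimal I M := by
  have hN : IsMatching I (symmDiff M (pairsOf I c)) := hc.isMatching_symmDiff hM
  have hon : ∀ u ∈ c.support.toFinset, prefers I u (symmDiff M (pairsOf I c)) M :=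
    fun u hu => hc.prefers_symmDiff hblock (List.mem_toFinset.mp hu)
  have hoff : ∀ u ∉ c.support.toFinset, ∀ x,
      edgeInM (symmDiff M (pairsOf I c)) s(u, x) ↔ edgeInM M s(u, x) :=
    fun u hu => edgeInM_symmDiff_pairsOf_of_notMem_support (mt List.mem_toFinset.mpr hu)
  have hgain := phi_eq_card_of_forall_mem_prefers hI hM hon hoff
  have hloss := phi_eq_zero_of_forall_mem_prefers hI hM hN hon hoff
  have hpos : 0 < phi I (symmDiff M (pairsOf I c)) M :=
    hgain ▸ Finset.card_pos.mpr ⟨v, List.mem_toFinset.mpr c.start_mem_support⟩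
  refine ⟨fun u hu => hon u (List.mem_toFinset.mpr hu), fun a ha b => ?_, fun b hb a => ?_,
    hgain, hloss, fun hP => hP ⟨_, hN, hpos, hloss⟩⟩
  · simpa using edgeInM_symmDiff_pairsOf_of_notMem_support (M := M) ha (.inr b)
  · simpa using edgeInM_symmDiff_pairsOf_of_notMem_support (M := M) hb (.inl a)

/-- Let `ρ` be an alternating cycle wrt a matching `M` such that every
edge of `ρ` not in `M` blocks `M`. Then every node on `ρ` prefers `M ⊕ ρ` to `M`, every
node not on `ρ` has the same partner in both matchings, `φ(M ⊕ ρ, M)` equals the number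
of nodes on `ρ`, `φ(M, M ⊕ ρ) = 0`, and `M` is not Pareto-optimal. -/
theorem stmt17 {A B : Type*} [Fintype A] [Fintype B] [DecidableEq A] [DecidableEq B]
    (I : PrefSys A B) (hI : I.IsValid) (M : Finset (A × B)) (hM : IsMatching I M)
    {v : A ⊕ B} (c : (graphOf I).Walk v v) (hc : IsAltCycle I M c)
    (hblock : ∀ (a : A) (b : B), s(Sum.inl a, Sum.inr b) ∈ c.edges → (a, b) ∉ M →
        Blocks I M a b) :
    (∀ u ∈ c.support, prefers I u (symmDiff M (pairsOf I c)) M) ∧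
    (∀ a : A, (Sum.inl a : A ⊕ B) ∉ c.support →
        ∀ b, ((a, b) ∈ symmDiff M (pairsOf I c) ↔ (a, b) ∈ M)) ∧
    (∀ b : B, (Sum.inr b : A ⊕ B) ∉ c.support →
        ∀ a, ((a, b) ∈ symmDiff M (pairsOf I c) ↔ (a, b) ∈ M)) ∧
    phi I (symmDiff M (pairsOf I c)) M =
      c.support.toFinset.card ∧
    phi I M (symmDiff M (pairsOf I c)) = 0 ∧
    ¬ IsParetoOptimal I M :=
  stmt17_general I hI.isAsymm M hM c hc hblock

end PopMax
end
end

section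
/- Let M be a perfect matching in G. Then M is Pareto-optimal if and only if there is no alternating cycle ρ with respect to M such that φ(M ⊕ ρ, M) > 0 and φ(M, M ⊕ ρ) = 0. -/
open Classical

noncomputable section

namespace PopMax

variable {A B : Type*}

/-!
Read matchings and cycles as graphs on `A ⊕ B`. The symmetric difference of two perfect matchings
is a disjoint union of cycles alternating between them. If no node prefers `M` to `N`, then `N` is
perfect as well, and switching `M` along one of these cycles gives each node on it its `N`-partner
and leaves every other node with its `M`-partner; so no node prefers `M` to the switched matching,
and if the cycle passes through a node preferring `N`, that node still gains. Conversely, switching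
a perfect matching along an alternating cycle yields a perfect matching.
-/

open SimpleGraph
open scoped symmDiff

theorem cycleChain_coe_iff_isChain_append_take {α : Type*} {r : α → α → Prop} (l : List α) :
    Cycle.Chain r (l : Cycle α) ↔ (l ++ l.take 1).IsChain r := by
  cases l with
  | nil => simp
  | cons a l => simp [Cycle.chain_coe_cons]

section Graph

variable {V : Type*} {G : SimpleGraph V}

section Chain

variable {r : Sym2 V → Sym2 V → Prop}

theorem cycleChain_edges_iff {v : V} {p : G.Walk v v} (hp : ¬ p.Nil) :
    Cycle.Chain r (p.edges : Cycle (Sym2 V)) ↔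
      r s(v, p.penultimate) s(v, p.snd) ∧ p.edges.IsChain r := by
  have hne : p.edges ≠ [] := Walk.edges_eq_nil.not.mpr hp
  rw [Cycle.chain_ne_nil r hne, List.isChain_cons, List.head?_eq_some_head hne,
    Walk.getLast_edges_eq_mk_penultimate_end, Walk.head_edges_eq_mk_start_snd,
    Sym2.eq_swap (a := p.penultimate)]
  simp

theorem isChain_edges_of_isTrail {u v : V} {p : G.Walk u v} (hp : p.IsTrail)
    (hr : ∀ ⦃x y z⦄, y ≠ z → s(x, y) ∈ p.edges → s(x, z) ∈ p.edges → r s(x, y) s(x, z)) :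
    p.edges.IsChain r := by
  induction p with
  | nil => simp
  | @cons u x _ hux q ih =>
    rw [Walk.isTrail_cons] at hp
    rw [Walk.edges_cons] at hr ⊢
    have hq := ih hp.1 fun _ _ _ hne hy hz ↦
      hr hne (List.mem_cons_of_mem _ hy) (List.mem_cons_of_mem _ hz)
    cases q with
    | nil => simp
    | @cons _ z _ hxz q' =>
      rw [Walk.edges_cons] at hp hr hq ⊢
      refine List.isChain_cons_cons.mpr ⟨?_, hq⟩
      have huz : u ≠ z := by
        rintro rfl
        exact hp.2 (Sym2.eq_swap ▸ List.mem_cons_self)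
      rw [Sym2.eq_swap]
      exact hr huz (by simp [Sym2.eq_swap]) (by simp)

theorem cycleChain_edges_iff_of_isCycle (hsymm : ∀ ⦃e f⦄, r e f → r f e) {v : V}
    {c : G.Walk v v} (hc : c.IsCycle) :
    Cycle.Chain r (c.edges : Cycle (Sym2 V)) ↔
      ∀ ⦃x y z⦄, y ≠ z → c.toSubgraph.Adj x y → c.toSubgraph.Adj x z → r s(x, y) s(x, z) := by
  constructor
  · intro hchain x y z hyz hy hz
    -- Rotate the cycle to start at `x`: its two edges at `x` become the first and the last one.
    have hx : x ∈ c.support := c.mem_verts_toSubgraph.mp hy.fst_mem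
    have hd : (c.rotate x hx).IsCycle := hc.rotate hx
    rw [← Cycle.coe_eq_coe.mpr (c.rotate_edges x hx), cycleChain_edges_iff hd.not_nil] at hchain
    rw [← c.toSubgraph_rotate hx, ← Subgraph.mem_neighborSet,
      hd.neighborSet_toSubgraph_endpoint] at hy hz
    rcases hy with rfl | rfl <;> rcases hz with rfl | rfl
    · exact absurd rfl hyz
    · exact hsymm hchain.1
    · exact hchain.1
    · exact absurd rfl hyz
  · intro hr
    refine (cycleChain_edges_iff hc.not_nil).mpr ⟨?_, ?_⟩
    · exact hr hc.snd_ne_penultimate.symm (c.toSubgraph_adj_penultimate hc.not_nil).symm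
        (c.toSubgraph_adj_snd hc.not_nil)
    · exact isChain_edges_of_isTrail hc.isTrail fun _ _ _ hyz hy hz ↦ hr hyz
        (Walk.adj_toSubgraph_iff_mem_edges.mpr hy) (Walk.adj_toSubgraph_iff_mem_edges.mpr hz)

end Chain

theorem neighborSet_symmDiff (G H : SimpleGraph V) (v : V) :
    (G ∆ H).neighborSet v = G.neighborSet v ∆ H.neighborSet v := by
  ext w
  simp [symmDiff_def]

theorem neighborSet_symmDiff_toSubgraph_of_notMem_support {H : SimpleGraph V} {u v x : V}
    {p : H.Walk u v} (hx : x ∉ p.support) :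
    (G ∆ p.toSubgraph.spanningCoe).neighborSet x = G.neighborSet x := by
  have hempty : p.toSubgraph.spanningCoe.neighborSet x = ∅ :=
    Set.eq_empty_of_forall_notMem fun _ hadj ↦
      hx (p.mem_verts_toSubgraph.mp (p.toSubgraph.edge_vert hadj))
  rw [neighborSet_symmDiff, hempty, ← Set.bot_eq_empty, symmDiff_bot]

theorem neighborSet_symmDiff_toSubgraph_of_mem_support [Finite V] {H : SimpleGraph V}
    (hcycles : (G ∆ H).IsCycles) {v x : V} {p : (G ∆ H).Walk v v} (hp : p.IsCycle)
    (hx : x ∈ p.support) :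
    (G ∆ p.toSubgraph.spanningCoe).neighborSet x = H.neighborSet x := by
  have := Fintype.ofFinite V
  have hnbr : p.toSubgraph.spanningCoe.neighborSet x = (G ∆ H).neighborSet x :=
    Set.ext (hp.adj_toSubgraph_iff_of_isCycles hcycles (p.mem_verts_toSubgraph.mpr hx))
  rw [neighborSet_symmDiff, hnbr, neighborSet_symmDiff, symmDiff_symmDiff_cancel_left]

theorem spanningCoe_toSubgraph_mapLe {G' : SimpleGraph V} (hle : G ≤ G') {u v : V}
    (p : G.Walk u v) :
    (p.mapLe hle).toSubgraph.spanningCoe = p.toSubgraph.spanningCoe := by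
  ext x y
  simp

end Graph

section PairGraph

variable {I : PrefSys A B} {M N : Finset (A × B)}

/-- The graph on the nodes `A ⊕ B` whose edges are the pairs in `M`. It carries matchings, and
edge sets of walks, over to Mathlib's theory of graphs. -/
def pairGraph (M : Finset (A × B)) : SimpleGraph (A ⊕ B) where
  Adj u w := edgeInM M s(u, w)
  symm := ⟨fun u w h ↦ by rwa [Sym2.eq_swap]⟩
  loopless := ⟨by rintro (a | b) ⟨a', b', _, h⟩ <;> simp at h⟩

@[simp]
theorem pairGraph_adj_inl_inr {a : A} {b : B} :
    (pairGraph M).Adj (Sum.inl a) (Sum.inr b) ↔ (a, b) ∈ M := by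
  simp [pairGraph, edgeInM]

@[simp]
theorem pairGraph_adj_inr_inl {a : A} {b : B} :
    (pairGraph M).Adj (Sum.inr b) (Sum.inl a) ↔ (a, b) ∈ M := by
  rw [adj_comm, pairGraph_adj_inl_inr]

@[simp]
theorem not_pairGraph_adj_inl_inl {a a' : A} :
    ¬ (pairGraph M).Adj (Sum.inl a) (Sum.inl a') := by
  simp [pairGraph, edgeInM]

@[simp]
theorem not_pairGraph_adj_inr_inr {b b' : B} :
    ¬ (pairGraph M).Adj (Sum.inr b) (Sum.inr b') := by
  simp [pairGraph, edgeInM]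

theorem pairGraph_symmDiff [DecidableEq A] [DecidableEq B] (M N : Finset (A × B)) :
    pairGraph (M ∆ N) = pairGraph M ∆ pairGraph N := by
  ext (a | b) (a' | b') <;> simp [symmDiff_def]

theorem pairGraph_le_graphOf_iff : pairGraph M ≤ graphOf I ↔ ∀ p ∈ M, I.E p.1 p.2 := by
  constructor
  · intro hle p hp
    simpa [graphOf] using hle (pairGraph_adj_inl_inr.mpr hp)
  · rintro hE _ _ ⟨a, b, hab, hedge⟩
    have hadj : (graphOf I).Adj (Sum.inl a) (Sum.inr b) := by simpa [graphOf] using hE _ hab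
    rwa [← mem_edgeSet, hedge, mem_edgeSet]

theorem pairGraph_pairsOf [Fintype A] [Fintype B] {u w : A ⊕ B} (p : (graphOf I).Walk u w) :
    pairGraph (pairsOf I p) = p.toSubgraph.spanningCoe := by
  have hmem (a : A) (b : B) :
      (a, b) ∈ pairsOf I p ↔ p.toSubgraph.Adj (Sum.inl a) (Sum.inr b) := by
    simp [pairsOf, Walk.adj_toSubgraph_iff_mem_edges]
  ext (a | b) (a' | b')
  · exact iff_of_false not_pairGraph_adj_inl_inl fun hadj ↦ by
      simpa [graphOf] using hadj.adj_sub
  · simp [hmem]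
  · simp [hmem, Subgraph.adj_comm]
  · exact iff_of_false not_pairGraph_adj_inr_inr fun hadj ↦ by
      simpa [graphOf] using hadj.adj_sub

theorem existsUnique_pairGraph_adj_inl {a : A} :
    (∃! w, (pairGraph M).Adj (Sum.inl a) w) ↔ ∃! b, (a, b) ∈ M := by
  simp [ExistsUnique]

theorem existsUnique_pairGraph_adj_inr {b : B} :
    (∃! w, (pairGraph M).Adj (Sum.inr b) w) ↔ ∃! a, (a, b) ∈ M := by
  simp [ExistsUnique]

theorem isPerfectMatching_iff_pairGraph :
    IsPerfectMatching I M ↔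
      pairGraph M ≤ graphOf I ∧ (⊤ : (pairGraph M).Subgraph).IsPerfectMatching := by
  rw [pairGraph_le_graphOf_iff, Subgraph.isPerfectMatching_iff]
  simp only [Subgraph.top_adj, Sum.forall, existsUnique_pairGraph_adj_inl,
    existsUnique_pairGraph_adj_inr]
  constructor
  · rintro ⟨⟨hE, huniqA, huniqB⟩, hmatchedA, hmatchedB⟩
    exact ⟨hE,
      fun a ↦ existsUnique_of_exists_of_unique (hmatchedA a) fun _ _ hab hab' ↦
        congrArg Prod.snd (huniqA _ hab _ hab' rfl),
      fun b ↦ existsUnique_of_exists_of_unique (hmatchedB b) fun _ _ hab hab' ↦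
        congrArg Prod.fst (huniqB _ hab _ hab' rfl)⟩
  · rintro ⟨hE, hA, hB⟩
    refine ⟨⟨hE, ?_, ?_⟩, fun a ↦ (hA a).exists, fun b ↦ (hB b).exists⟩
    · rintro ⟨a, b⟩ hab ⟨_, b'⟩ hab' rfl
      rw [(hA a).unique hab hab']
    · rintro ⟨a, b⟩ hab ⟨a', _⟩ hab' rfl
      rw [(hB b).unique hab hab']

theorem isAltCycle_iff_isAlternating {v : A ⊕ B} {c : (graphOf I).Walk v v} :
    IsAltCycle I M c ↔
      c.IsCycle ∧ c.toSubgraph.spanningCoe.IsAlternating (pairGraph M) := by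
  refine and_congr_right fun hc ↦ ?_
  have hsymm : ∀ ⦃e f⦄, altRel M e f → altRel M f e := fun _ _ ↦ by grind [altRel]
  exact (cycleChain_coe_iff_isChain_append_take _).symm.trans
    (cycleChain_edges_iff_of_isCycle hsymm hc)

theorem IsPerfectMatching.symmDiff_pairsOf [Fintype A] [Fintype B] [DecidableEq A] [DecidableEq B]
    (hM : IsPerfectMatching I M) {v : A ⊕ B} {c : (graphOf I).Walk v v} (hc : IsAltCycle I M c) :
    IsPerfectMatching I (M ∆ pairsOf I c) := by
  rw [isPerfectMatching_iff_pairGraph] at hM ⊢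
  rw [isAltCycle_iff_isAlternating] at hc
  rw [pairGraph_symmDiff, pairGraph_pairsOf]
  refine ⟨symmDiff_le_sup.trans (sup_le hM.1 c.toSubgraph.spanningCoe_le), ?_⟩
  have hswitch := hM.2.symmDiff_of_isAlternating (by simpa using hc.2)
    hc.1.isCycles_spanningCoe_toSubgraph
  rwa [Subgraph.spanningCoe_top] at hswitch

theorem IsPerfectMatching.isCycles_symmDiff (hM : IsPerfectMatching I M)
    (hN : IsPerfectMatching I N) : (pairGraph M ∆ pairGraph N).IsCycles := by
  simpa using (isPerfectMatching_iff_pairGraph.mp hM).2.symmDiff_isCycles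
    (isPerfectMatching_iff_pairGraph.mp hN).2

theorem IsPerfectMatching.isAlternating_symmDiff (hM : IsPerfectMatching I M)
    (hN : IsPerfectMatching I N) :
    (pairGraph M ∆ pairGraph N).IsAlternating (pairGraph M) := by
  simpa using (isPerfectMatching_iff_pairGraph.mp hM).2.isAlternating_symmDiff_left
    (isPerfectMatching_iff_pairGraph.mp hN).2

end PairGraph

section Preferences

variable {I : PrefSys A B} {M M' N N' : Finset (A × B)}

/-- No node strictly prefers a partner to itself. Unlike in `PrefSys.IsValid`, ties,
incomparable partners and cyclic preferences are allowed. -/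
def PrefSys.IsIrrefl (I : PrefSys A B) : Prop :=
  (∀ a b, ¬ I.prefA a b b) ∧ ∀ b a, ¬ I.prefB b a a

theorem PrefSys.IsValid.isIrrefl (hI : I.IsValid) : I.IsIrrefl :=
  ⟨hI.1, hI.2.2.2.1⟩

theorem prefers_congr {u : A ⊕ B}
    (hM : (pairGraph M).neighborSet u = (pairGraph M').neighborSet u)
    (hN : (pairGraph N).neighborSet u = (pairGraph N').neighborSet u) :
    prefers I u M N ↔ prefers I u M' N' := by
  rcases u with a | b
  · have hMa (b : B) : (a, b) ∈ M ↔ (a, b) ∈ M' := by simpa using Set.ext_iff.mp hM (Sum.inr b)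
    have hNa (b : B) : (a, b) ∈ N ↔ (a, b) ∈ N' := by simpa using Set.ext_iff.mp hN (Sum.inr b)
    simp only [prefers, prefersA, matchedA, hMa, hNa]
  · have hMb (a : A) : (a, b) ∈ M ↔ (a, b) ∈ M' := by simpa using Set.ext_iff.mp hM (Sum.inl a)
    have hNb (a : A) : (a, b) ∈ N ↔ (a, b) ∈ N' := by simpa using Set.ext_iff.mp hN (Sum.inl a)
    simp only [prefers, prefersB, matchedB, hMb, hNb]

theorem IsMatching.not_prefers_self (hI : I.IsIrrefl) (hM : IsMatching I M) (u : A ⊕ B) :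
    ¬ prefers I u M M := by
  rcases u with a | b
  · rintro ⟨b, hab, hunmatched | ⟨b', hab', hpref⟩⟩
    · exact hunmatched ⟨b, hab⟩
    · obtain rfl : b = b' := congrArg Prod.snd (hM.2.1 _ hab _ hab' rfl)
      exact hI.1 a b hpref
  · rintro ⟨a, hab, hunmatched | ⟨a', hab', hpref⟩⟩
    · exact hunmatched ⟨a, hab⟩
    · obtain rfl : a = a' := congrArg Prod.fst (hM.2.2 _ hab _ hab' rfl)
      exact hI.2 b a hpref

theorem IsPerfectMatching.of_forall_not_prefers (hM : IsPerfectMatching I M)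
    (hN : IsMatching I N) (hMN : ∀ u, ¬ prefers I u M N) : IsPerfectMatching I N := by
  refine ⟨hN, fun a ↦ ?_, fun b ↦ ?_⟩
  · by_contra hunmatched
    obtain ⟨b, hab⟩ := hM.2.1 a
    exact hMN (Sum.inl a) ⟨b, hab, Or.inl hunmatched⟩
  · by_contra hunmatched
    obtain ⟨a, hab⟩ := hM.2.2 b
    exact hMN (Sum.inr b) ⟨a, hab, Or.inl hunmatched⟩

/-- `N` Pareto-dominates `M`: some node prefers `N` to `M` and no node prefers `M` to `N`. -/
def ParetoDominates (I : PrefSys A B) (N M : Finset (A × B)) : Prop :=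
  (∃ u, prefers I u N M) ∧ ∀ u, ¬ prefers I u M N

theorem paretoDominates_iff_phi [Fintype A] [Fintype B] :
    ParetoDominates I N M ↔ 0 < phi I N M ∧ phi I M N = 0 := by
  simp [ParetoDominates, phi, Finset.card_pos, Finset.Nonempty, Finset.filter_eq_empty_iff]

theorem IsMatching.neighborSet_symmDiff_nonempty_of_prefers (hI : I.IsIrrefl) (hM : IsMatching I M)
    {u : A ⊕ B} (hu : prefers I u N M) :
    ((pairGraph M ∆ pairGraph N).neighborSet u).Nonempty := by
  rw [Set.nonempty_iff_ne_empty, neighborSet_symmDiff, ← Set.bot_eq_empty, Ne, symmDiff_eq_bot]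
  intro heq
  exact hM.not_prefers_self hI u ((prefers_congr heq.symm rfl).mp hu)

theorem paretoDominates_symmDiff_pairsOf [Fintype A] [Fintype B] [DecidableEq A] [DecidableEq B]
    (hI : I.IsIrrefl) (hM : IsMatching I M)
    (hcycles : (pairGraph M ∆ pairGraph N).IsCycles) (hMN : ∀ u, ¬ prefers I u M N)
    {u : A ⊕ B} (hu : prefers I u N M) {p : (pairGraph M ∆ pairGraph N).Walk u u}
    (hp : p.IsCycle) (hle : pairGraph M ∆ pairGraph N ≤ graphOf I) :
    ParetoDominates I (M ∆ pairsOf I (p.mapLe hle)) M := by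
  have hswitch : pairGraph (M ∆ pairsOf I (p.mapLe hle)) =
      pairGraph M ∆ p.toSubgraph.spanningCoe := by
    rw [pairGraph_symmDiff, pairGraph_pairsOf, spanningCoe_toSubgraph_mapLe]
  have hon (x) (hx : x ∈ p.support) :
      (pairGraph (M ∆ pairsOf I (p.mapLe hle))).neighborSet x = (pairGraph N).neighborSet x := by
    rw [hswitch, neighborSet_symmDiff_toSubgraph_of_mem_support hcycles hp hx]
  have hoff (x) (hx : x ∉ p.support) :
      (pairGraph (M ∆ pairsOf I (p.mapLe hle))).neighborSet x = (pairGraph M).neighborSet x := by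
    rw [hswitch, neighborSet_symmDiff_toSubgraph_of_notMem_support hx]
  refine ⟨⟨u, (prefers_congr (hon u p.start_mem_support) rfl).mpr hu⟩, fun x hx ↦ ?_⟩
  by_cases hxp : x ∈ p.support
  · exact hMN x ((prefers_congr rfl (hon x hxp)).mp hx)
  · exact hM.not_prefers_self hI x ((prefers_congr rfl (hoff x hxp)).mp hx)

theorem ParetoDominates.exists_isAltCycle [Fintype A] [Fintype B] [DecidableEq A] [DecidableEq B]
    (hI : I.IsIrrefl) (hM : IsPerfectMatching I M) (hN : IsMatching I N)
    (hdom : ParetoDominates I N M) :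
    ∃ (v : A ⊕ B) (c : (graphOf I).Walk v v),
      IsAltCycle I M c ∧ ParetoDominates I (M ∆ pairsOf I c) M := by
  obtain ⟨⟨u, hu⟩, hMN⟩ := hdom
  have hNp : IsPerfectMatching I N := hM.of_forall_not_prefers hN hMN
  have hcycles := hM.isCycles_symmDiff hNp
  have hle : pairGraph M ∆ pairGraph N ≤ graphOf I :=
    symmDiff_le_sup.trans <| sup_le (pairGraph_le_graphOf_iff.mpr hM.1.1)
      (pairGraph_le_graphOf_iff.mpr hN.1)
  obtain ⟨p, hp, -⟩ := hcycles.exists_cycle_toSubgraph_verts_eq_connectedComponentSupp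
    ConnectedComponent.connectedComponentMk_mem
    (hM.1.neighborSet_symmDiff_nonempty_of_prefers hI hu)
  refine ⟨u, p.mapLe hle, isAltCycle_iff_isAlternating.mpr ⟨hp.mapLe hle, ?_⟩,
    paretoDominates_symmDiff_pairsOf hI hM.1 hcycles hMN hu hp hle⟩
  rw [spanningCoe_toSubgraph_mapLe]
  exact (hM.isAlternating_symmDiff hNp).spanningCoe p.toSubgraph

end Preferences

theorem stmt18_general {A B : Type*} [Fintype A] [Fintype B] [DecidableEq A] [DecidableEq B]
    (I : PrefSys A B) (hI : I.IsIrrefl) (M : Finset (A × B)) (hM : IsPerfectMatching I M) :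
    IsParetoOptimal I M ↔
      ¬ ∃ (v : A ⊕ B) (c : (graphOf I).Walk v v), IsAltCycle I M c ∧
          0 < phi I (symmDiff M (pairsOf I c)) M ∧
          phi I M (symmDiff M (pairsOf I c)) = 0 := by
  simp only [IsParetoOptimal, ← paretoDominates_iff_phi]
  refine not_congr ⟨?_, ?_⟩
  · rintro ⟨N, hN, hdom⟩
    exact hdom.exists_isAltCycle hI hM hN
  · rintro ⟨v, c, hc, hdom⟩
    exact ⟨M ∆ pairsOf I c, (hM.symmDiff_pairsOf hc).1, hdom⟩

/-- A perfect matching `M` is Pareto-optimal iff there is no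
alternating cycle `ρ` wrt `M` with `φ(M ⊕ ρ, M) > 0` and `φ(M, M ⊕ ρ) = 0`. -/
theorem stmt18 {A B : Type*} [Fintype A] [Fintype B] [DecidableEq A] [DecidableEq B]
    (I : PrefSys A B) (hI : I.IsValid) (M : Finset (A × B))
    (hM : IsPerfectMatching I M) :
    IsParetoOptimal I M ↔
      ¬ ∃ (v : A ⊕ B) (c : (graphOf I).Walk v v), IsAltCycle I M c ∧
          0 < phi I (symmDiff M (pairsOf I c)) M ∧
          phi I M (symmDiff M (pairsOf I c)) = 0 :=
  stmt18_general I hI.isIrrefl M hM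

end PopMax
end
end
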